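/- For all ε₀* > 0 and C* > 0 there exists a constant C̃₆ > 0, depending only on ε₀* and C*, with the following property. Let N ≥ 1 (h = 1/N), let Δt > 0, and let N̂^{m+1}, N̂^m, n^{m+1}, n^m be periodic grid functions with ε₀* ≤ N̂^{m+1}(i,j,k) ≤ C* and ε₀* ≤ N̂^m(i,j,k) ≤ C* for all (i,j,k), ‖N̂^{m+1} − N̂^m‖_∞ ≤ C*·Δt, n^{m+1}(i,j,k) ≥ ε₀*/2 and n^m(i,j,k) ≥ ε₀*/2 for all (i,j,k), ‖N̂^{m+1} − n^{m+1}‖_∞ ≤ Δt, and ‖N̂^m − n^m‖_∞ ≤ Δt. Set ñ^{m+1} = N̂^{m+1} − n^{m+1} and ñ^m = N̂^m − n^m. Then ⟨ñ^{m+1} − ñ^m, G¹_{N̂^m}(N̂^{m+1}) − G¹_{n^m}(n^{m+1})⟩ ≥ (1/2)·(⟨1/N̂^{m+1}, (ñ^{m+1})²⟩ − ⟨1/N̂^m, (ñ^m)²⟩) − C̃₆·Δt·(‖ñ^{m+1}‖₂² + ‖ñ^m‖₂²). -/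

import Mathlib

open scoped BigOperators

/-- The periodic grid of indices: `(ZMod N)^3`. -/
abbrev GridIdx (N : ℕ) := ZMod N × ZMod N × ZMod N

namespace PNP

/-- Shift the first index by `a`. -/
def xsh {N : ℕ} (p : GridIdx N) (a : ZMod N) : GridIdx N := (p.1 + a, p.2.1, p.2.2)
/-- Shift the second index by `a`. -/
def ysh {N : ℕ} (p : GridIdx N) (a : ZMod N) : GridIdx N := (p.1, p.2.1 + a, p.2.2)
/-- Shift the third index by `a`. -/
def zsh {N : ℕ} (p : GridIdx N) (a : ZMod N) : GridIdx N := (p.1, p.2.1, p.2.2 + a)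

/-- Forward difference in `x`: `(D_x f)(p) = (f(p + e_x) - f(p)) / h` with `h = 1/N`. -/
noncomputable def Dx (N : ℕ) (f : GridIdx N → ℝ) : GridIdx N → ℝ :=
  fun p => (f (xsh p 1) - f p) * N
/-- Forward difference in `y`. -/
noncomputable def Dy (N : ℕ) (f : GridIdx N → ℝ) : GridIdx N → ℝ :=
  fun p => (f (ysh p 1) - f p) * N
/-- Forward difference in `z`. -/
noncomputable def Dz (N : ℕ) (f : GridIdx N → ℝ) : GridIdx N → ℝ :=
  fun p => (f (zsh p 1) - f p) * N

/-- Backward difference in `x`: `(d_x f)(p) = (f(p) - f(p - e_x)) / h`. -/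
noncomputable def dxm (N : ℕ) (f : GridIdx N → ℝ) : GridIdx N → ℝ :=
  fun p => (f p - f (xsh p (-1))) * N
/-- Backward difference in `y`. -/
noncomputable def dym (N : ℕ) (f : GridIdx N → ℝ) : GridIdx N → ℝ :=
  fun p => (f p - f (ysh p (-1))) * N
/-- Backward difference in `z`. -/
noncomputable def dzm (N : ℕ) (f : GridIdx N → ℝ) : GridIdx N → ℝ :=
  fun p => (f p - f (zsh p (-1))) * N

/-- Forward average in `x`: `(A_x f)(p) = (f(p + e_x) + f(p)) / 2`. -/
noncomputable def Ax (N : ℕ) (f : GridIdx N → ℝ) : GridIdx N → ℝ :=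
  fun p => (f (xsh p 1) + f p) / 2
/-- Forward average in `y`. -/
noncomputable def Ay (N : ℕ) (f : GridIdx N → ℝ) : GridIdx N → ℝ :=
  fun p => (f (ysh p 1) + f p) / 2
/-- Forward average in `z`. -/
noncomputable def Az (N : ℕ) (f : GridIdx N → ℝ) : GridIdx N → ℝ :=
  fun p => (f (zsh p 1) + f p) / 2

/-- The discrete Laplacian `Δ_h f = d_x(D_x f) + d_y(D_y f) + d_z(D_z f)`. -/
noncomputable def lap (N : ℕ) (f : GridIdx N → ℝ) : GridIdx N → ℝ :=
  fun p => dxm N (Dx N f) p + dym N (Dy N f) p + dzm N (Dz N f) p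

/-- The discrete inner product `⟨f, g⟩ = h³ ∑ f·g` with `h = 1/N`. -/
noncomputable def ip (N : ℕ) [NeZero N] (f g : GridIdx N → ℝ) : ℝ :=
  ((1 : ℝ) / N) ^ 3 * ∑ p : GridIdx N, f p * g p

/-- The discrete `L²` norm `‖f‖₂ = ⟨f, f⟩^{1/2}`. -/
noncomputable def l2 (N : ℕ) [NeZero N] (f : GridIdx N → ℝ) : ℝ :=
  Real.sqrt (ip N f f)

/-- The discrete maximum norm `‖f‖_∞ = max |f|`. -/
noncomputable def linf (N : ℕ) [NeZero N] (f : GridIdx N → ℝ) : ℝ :=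
  ⨆ p : GridIdx N, |f p|

/-- A grid function has zero mean if its values sum to zero. -/
def zeroMean (N : ℕ) [NeZero N] (f : GridIdx N → ℝ) : Prop :=
  ∑ p : GridIdx N, f p = 0

/-- With `F(x) = x·ln x`, the difference quotient `G¹_a(x) = (F(x) - F(a))/(x - a)`
for `x ≠ a`, with value `F'(a) = ln a + 1` at `x = a`. -/
noncomputable def G1 (a x : ℝ) : ℝ :=
  if x = a then Real.log a + 1
  else (x * Real.log x - a * Real.log a) / (x - a)

end PNP

open PNP

lemma G1_eq_integral {a x : ℝ} (ha : 0 < a) (hx : 0 < x) :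
    G1 a x = ∫ s in (0:ℝ)..1, (Real.log (a + s * (x - a)) + 1) := by
  unfold G1
  split_ifs with h
  · subst h; simp
  · have hpos : ∀ s ∈ Set.uIcc (0:ℝ) 1, 0 < a + s * (x - a) := by
      intro s hs
      rw [Set.uIcc_of_le zero_le_one] at hs
      obtain ⟨h0, h1⟩ := hs
      rcases le_total a x with h | h
      · nlinarith
      · nlinarith
    have hne : x - a ≠ 0 := sub_ne_zero.mpr h
    have key := intervalIntegral.integral_eq_sub_of_hasDerivAt (a := (0:ℝ)) (b := 1)
      (f := fun s => ((a + s * (x - a)) * Real.log (a + s * (x - a))) / (x - a))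
      (f' := fun s => Real.log (a + s * (x - a)) + 1) ?_ ?_
    · rw [key]; simp; ring
    · intro s hs
      have h1 : HasDerivAt (fun s : ℝ => a + s * (x - a)) (x - a) s := by
        simpa using ((hasDerivAt_id s).mul_const (x - a)).const_add a
      have h2 := ((Real.hasDerivAt_mul_log (hpos s hs).ne').comp s h1).div_const (x - a)
      rw [mul_div_assoc, div_self hne, mul_one] at h2
      exact h2
    · apply ContinuousOn.intervalIntegrable
      refine ContinuousOn.add (ContinuousOn.log (by fun_prop) ?_) continuousOn_const
      intro s hs; exact (hpos s hs).ne'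

lemma inv_diff_bound {ε A q M : ℝ} (hε : 0 < ε) (hA : ε ≤ A) (hq : ε / 2 ≤ q)
    (h : |q - A| ≤ M) : |1 / q - 1 / A| ≤ 2 * M / ε ^ 2 := by
  have hA0 : 0 < A := by linarith
  have hq0 : 0 < q := by linarith
  have hM : 0 ≤ M := (abs_nonneg _).trans h
  have : 1 / q - 1 / A = -(q - A) / (q * A) := by field_simp; ring
  rw [this, abs_div, abs_neg, abs_of_pos (mul_pos hq0 hA0), div_le_div_iff₀ (by positivity) (by positivity)]
  have h1 : ε ^ 2 ≤ 2 * (q * A) := by nlinarith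
  calc |q - A| * ε ^ 2 ≤ M * (2 * (q * A)) := by gcongr
    _ = _ := by ring

lemma log_diff_bound {ε A p q M : ℝ} (hε : 0 < ε) (hA : ε ≤ A) (hp : ε / 2 ≤ p) (hq : ε / 2 ≤ q)
    (h1 : |p - A| ≤ M) (h2 : |q - A| ≤ M) :
    |Real.log p - Real.log q - (p - q) / A| ≤ 2 * M / ε ^ 2 * |p - q| := by
  have hp0 : 0 < p := by linarith
  have hq0 : 0 < q := by linarith
  have u : Real.log p - Real.log q ≤ (p - q) / q := by
    have := Real.log_le_sub_one_of_pos (div_pos hp0 hq0)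
    rw [Real.log_div hp0.ne' hq0.ne'] at this
    rw [sub_div, div_self hq0.ne']; exact this
  have l : (p - q) / p ≤ Real.log p - Real.log q := by
    have := Real.log_le_sub_one_of_pos (div_pos hq0 hp0)
    rw [Real.log_div hq0.ne' hp0.ne'] at this
    rw [sub_div, div_self hp0.ne']; linarith
  have b : ∀ r, ε / 2 ≤ r → |r - A| ≤ M →
      |(p - q) / r - (p - q) / A| ≤ 2 * M / ε ^ 2 * |p - q| := by
    intro r hr hrA
    have : (p - q) / r - (p - q) / A = (1 / r - 1 / A) * (p - q) := by ring
    rw [this, abs_mul]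
    exact mul_le_mul_of_nonneg_right (inv_diff_bound hε hA hr hrA) (abs_nonneg _)
  have bp := abs_le.mp (b p hp h1)
  have bq := abs_le.mp (b q hq h2)
  rw [abs_le]; constructor <;> linarith

lemma conv_mem {c u v s : ℝ} (hu : c ≤ u) (hv : c ≤ v) (h0 : 0 ≤ s) (h1 : s ≤ 1) :
    c ≤ u + s * (v - u) := by nlinarith

lemma G1_diff_bound {ε Cs dt a A b B : ℝ} (hε : 0 < ε) (hCs : 0 < Cs) (hdt : 0 < dt)
    (ha : ε ≤ a) (hA : ε ≤ A) (hb : ε / 2 ≤ b) (hB : ε / 2 ≤ B)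
    (h : |A - a| ≤ Cs * dt) (hx : |A - B| ≤ dt) (hy : |a - b| ≤ dt) :
    |G1 a A - G1 b B - ((A - B) + (a - b)) / (2 * A)|
      ≤ 2 * ((Cs + 1) * dt) / ε ^ 2 * (|A - B| + |a - b|) := by
  have I : ∀ {u v : ℝ}, 0 < u → 0 < v →
      IntervalIntegrable (fun s => Real.log (u + s * (v - u)) + 1) MeasureTheory.volume 0 1 := by
    intro u v hu hv
    apply ContinuousOn.intervalIntegrable
    refine ContinuousOn.add (ContinuousOn.log (by fun_prop) ?_) continuousOn_const
    intro s hs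
    rw [Set.uIcc_of_le zero_le_one] at hs
    have := conv_mem (min_le_left u v) (min_le_right u v) hs.1 hs.2
    exact (lt_of_lt_of_le (lt_min hu hv) this).ne'
  have ha0 : 0 < a := by linarith
  have hA0 : 0 < A := by linarith
  have hb0 : 0 < b := by linarith
  have hB0 : 0 < B := by linarith
  have hlin : ((A - B) + (a - b)) / (2 * A)
      = ∫ s in (0:ℝ)..1, ((a + s * (A - a)) - (b + s * (B - b))) / A := by
    have e : ∀ s : ℝ, ((a + s * (A - a)) - (b + s * (B - b))) / A
        = (a - b) / A + s * (((A - a) - (B - b)) / A) := by intro s; ring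
    simp_rw [e]
    rw [intervalIntegral.integral_add (by simp) (Continuous.intervalIntegrable (by fun_prop) _ _)]
    rw [intervalIntegral.integral_mul_const]
    simp
    field_simp
    ring
  rw [G1_eq_integral ha0 hA0, G1_eq_integral hb0 hB0, hlin,
    ← intervalIntegral.integral_sub (I ha0 hA0) (I hb0 hB0),
    ← intervalIntegral.integral_sub ((I ha0 hA0).sub (I hb0 hB0))
      (Continuous.intervalIntegrable (by fun_prop) _ _)]
  have := intervalIntegral.norm_integral_le_of_norm_le_const (a := (0:ℝ)) (b := 1)
    (f := fun s => Real.log (a + s * (A - a)) + 1 - (Real.log (b + s * (B - b)) + 1)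
      - ((a + s * (A - a)) - (b + s * (B - b))) / A)
    (C := 2 * ((Cs + 1) * dt) / ε ^ 2 * (|A - B| + |a - b|)) ?_
  · simpa using this
  · intro s hs
    rw [Set.uIoc_of_le zero_le_one] at hs
    obtain ⟨h0, h1⟩ := hs
    have hp := conv_mem (show ε / 2 ≤ a by linarith) (show ε / 2 ≤ A by linarith) h0.le h1
    have hq := conv_mem hb hB h0.le h1
    have e1 : |(a + s * (A - a)) - A| ≤ Cs * dt := by
      have : (a + s * (A - a)) - A = -((1 - s) * (A - a)) := by ring
      rw [this, abs_neg, abs_mul, abs_of_nonneg (by linarith : 0 ≤ 1 - s)]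
      nlinarith [abs_nonneg (A - a)]
    have e3 : |(a + s * (A - a)) - (b + s * (B - b))| ≤ (1 - s) * |a - b| + s * |A - B| := by
      have : (a + s * (A - a)) - (b + s * (B - b)) = (1 - s) * (a - b) + s * (A - B) := by ring
      rw [this]
      refine (abs_add_le _ _).trans ?_
      rw [abs_mul, abs_mul, abs_of_nonneg (by linarith : 0 ≤ 1 - s), abs_of_pos h0]
    have e2 : |(b + s * (B - b)) - A| ≤ (Cs + 1) * dt := by
      have t := abs_sub_le (b + s * (B - b)) (a + s * (A - a)) A
      rw [abs_sub_comm (b + s * (B - b)) (a + s * (A - a))] at t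
      have : (1 - s) * |a - b| + s * |A - B| ≤ dt := by nlinarith
      linarith
    have := log_diff_bound hε hA hp hq (e1.trans (by linarith)) e2
    rw [Real.norm_eq_abs]
    have e4 : |(a + s * (A - a)) - (b + s * (B - b))| ≤ |A - B| + |a - b| := by
      nlinarith [abs_nonneg (a - b), abs_nonneg (A - B)]
    calc _ = |Real.log (a + s * (A - a)) - Real.log (b + s * (B - b))
          - ((a + s * (A - a)) - (b + s * (B - b))) / A| := by congr 1; ring
      _ ≤ _ := this
      _ ≤ _ := by gcongr

lemma pointwise_bound {ε Cs dt a A b B : ℝ} (hε : 0 < ε) (hCs : 0 < Cs) (hdt : 0 < dt)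
    (ha : ε ≤ a) (hA : ε ≤ A) (hb : ε / 2 ≤ b) (hB : ε / 2 ≤ B)
    (h : |A - a| ≤ Cs * dt) (hx : |A - B| ≤ dt) (hy : |a - b| ≤ dt) :
    (1 / 2) * (1 / A * (A - B) ^ 2 - 1 / a * (a - b) ^ 2)
      - (5 * (Cs + 1) / ε ^ 2) * dt * ((A - B) * (A - B) + (a - b) * (a - b))
      ≤ ((A - B) - (a - b)) * (G1 a A - G1 b B) := by
  have hD := G1_diff_bound hε hCs hdt ha hA hb hB h hx hy
  have hI := inv_diff_bound hε hA (by linarith : ε / 2 ≤ a) ((abs_sub_comm a A).trans_le h)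
  generalize G1 a A - G1 b B = D at *
  generalize A - B = x at *
  generalize a - b = y at *
  obtain ⟨e, he⟩ : ∃ e, D - (x + y) / (2 * A) = e := ⟨_, rfl⟩
  rw [he] at hD
  have hDe : D = (x + y) / (2 * A) + e := by linarith
  set k := dt / ε ^ 2 with hk
  have hk0 : 0 < k := by positivity
  have r1 : 2 * ((Cs + 1) * dt) / ε ^ 2 = 2 * (Cs + 1) * k := by rw [hk]; ring
  have r2 : 2 * (Cs * dt) / ε ^ 2 = 2 * Cs * k := by rw [hk]; ring
  have r3 : 5 * (Cs + 1) / ε ^ 2 * dt = 5 * (Cs + 1) * k := by rw [hk]; ring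
  rw [r1] at hD; rw [r2] at hI; rw [r3]
  have m1 : |(x - y) * e| ≤ 4 * (Cs + 1) * k * (x * x + y * y) := by
    rw [abs_mul]
    have t : |x - y| ≤ |x| + |y| := abs_sub x y
    calc |x - y| * |e| ≤ (|x| + |y|) * (2 * (Cs + 1) * k * (|x| + |y|)) := by gcongr
      _ = 2 * (Cs + 1) * k * (|x| + |y|) ^ 2 := by ring
      _ ≤ 2 * (Cs + 1) * k * (2 * (x * x + y * y)) := by
        gcongr
        nlinarith [sq_nonneg (|x| - |y|), abs_mul_abs_self x, abs_mul_abs_self y]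
      _ = _ := by ring
  have m2 : -(2 * Cs * k) * y ^ 2 ≤ (1 / a - 1 / A) * y ^ 2 :=
    mul_le_mul_of_nonneg_right (abs_le.mp hI).1 (sq_nonneg y)
  have m3 := (abs_le.mp m1).1
  have id1 : (x - y) * D = (1 / 2) * (1 / A * x ^ 2 - 1 / a * y ^ 2)
      + (1 / 2) * ((1 / a - 1 / A) * y ^ 2) + (x - y) * e := by
    rw [hDe]; ring
  rw [id1]
  have m4 : 0 ≤ k * (x * x) := mul_nonneg (by positivity) (mul_self_nonneg x)
  have m5 : 0 ≤ Cs * k * (x * x) := mul_nonneg (by positivity) (mul_self_nonneg x)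
  have m6 : 0 ≤ k * (y * y) := mul_nonneg (by positivity) (mul_self_nonneg y)
  nlinarith

lemma le_of_linf {N : ℕ} [NeZero N] {f : GridIdx N → ℝ} {c : ℝ} (h : linf N f ≤ c)
    (p : GridIdx N) : |f p| ≤ c :=
  (le_ciSup (f := fun p => |f p|) (Set.finite_range _).bddAbove p).trans h

lemma l2_sq {N : ℕ} [NeZero N] (f : GridIdx N → ℝ) : l2 N f ^ 2 = ip N f f := by
  unfold l2
  rw [Real.sq_sqrt]
  unfold ip
  exact mul_nonneg (by positivity) (Finset.sum_nonneg fun p _ => mul_self_nonneg _)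

/-- Refined estimate for the `G¹` nonlinear inner product with the
discrete temporal derivative of the error. -/
theorem stmt16 (ε Cs : ℝ) (hε : 0 < ε) (hCs : 0 < Cs) :
    ∃ C6 : ℝ, 0 < C6 ∧
      ∀ (N : ℕ) [NeZero N], ∀ dt : ℝ, 0 < dt →
      ∀ Nh1 Nh0 n1 n0 : GridIdx N → ℝ,
        (∀ p, ε ≤ Nh1 p ∧ Nh1 p ≤ Cs) →
        (∀ p, ε ≤ Nh0 p ∧ Nh0 p ≤ Cs) →
        linf N (fun p => Nh1 p - Nh0 p) ≤ Cs * dt →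
        (∀ p, ε / 2 ≤ n1 p) → (∀ p, ε / 2 ≤ n0 p) →
        linf N (fun p => Nh1 p - n1 p) ≤ dt →
        linf N (fun p => Nh0 p - n0 p) ≤ dt →
        (1 / 2) * (ip N (fun p => 1 / Nh1 p) (fun p => (Nh1 p - n1 p) ^ 2)
              - ip N (fun p => 1 / Nh0 p) (fun p => (Nh0 p - n0 p) ^ 2))
            - C6 * dt * ((l2 N (fun p => Nh1 p - n1 p)) ^ 2
              + (l2 N (fun p => Nh0 p - n0 p)) ^ 2)
          ≤ ip N (fun p => (Nh1 p - n1 p) - (Nh0 p - n0 p))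
              (fun p => G1 (Nh0 p) (Nh1 p) - G1 (n0 p) (n1 p)) := by
  refine ⟨5 * (Cs + 1) / ε ^ 2, by positivity, ?_⟩
  intro N _ dt hdt Nh1 Nh0 n1 n0 h1 h0 h10 hn1 hn0 e1 e0
  rw [l2_sq, l2_sq]
  have key := Finset.sum_le_sum (s := Finset.univ) fun (p : GridIdx N) _ =>
    pointwise_bound hε hCs hdt (h0 p).1 (h1 p).1 (hn0 p) (hn1 p)
      (le_of_linf h10 p) (le_of_linf e1 p) (le_of_linf e0 p)
  have key2 := mul_le_mul_of_nonneg_left key (by positivity : (0:ℝ) ≤ ((1:ℝ) / N) ^ 3)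
  unfold ip
  refine le_trans (le_of_eq ?_) key2
  rw [Finset.sum_sub_distrib, ← Finset.mul_sum, ← Finset.mul_sum, Finset.sum_sub_distrib,
    Finset.sum_add_distrib]
  ring
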